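/- Let Ω ⊆ ℝ^n be open, b ≥ 0 a constant, and h : Ω → ℝ a smooth convex function with D²h(x) positive definite for all x ∈ Ω, satisfying Δh + b·det(D²h) = 1 on Ω. Set f = (det D²h)^{1/n} and define the linearized operator L g = Δg + b·det(D²h)·tr((D²h)^{−1} D²g). Then L f ≤ 0 on Ω; that is, f is a supersolution of the linearized equation. -/

import Mathlib

/-- The Hessian matrix `D²f(x)` of `f : ℝⁿ → ℝ` at `x`, with entries `∂_i ∂_j f(x)`. -/
noncomputable def Hess (n : ℕ) (f : EuclideanSpace ℝ (Fin n) → ℝ)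
    (x : EuclideanSpace ℝ (Fin n)) : Matrix (Fin n) (Fin n) ℝ :=
  Matrix.of fun i j =>
    iteratedFDeriv ℝ 2 f x ![EuclideanSpace.single i 1, EuclideanSpace.single j 1]

open scoped ContDiff

/-- Partial derivative. -/
noncomputable def pd {n : ℕ} (i : Fin n) (g : EuclideanSpace ℝ (Fin n) → ℝ)
    (x : EuclideanSpace ℝ (Fin n)) : ℝ := fderiv ℝ g x (EuclideanSpace.single i 1)

/-- Entrywise partial derivative. -/
noncomputable def pdM {n : ℕ} (i : Fin n) (A : EuclideanSpace ℝ (Fin n) → Matrix (Fin n) (Fin n) ℝ)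
    (x : EuclideanSpace ℝ (Fin n)) : Matrix (Fin n) (Fin n) ℝ :=
  Matrix.of fun k l => pd i (fun y => A y k l) x

section
variable {n : ℕ} {Ω : Set (EuclideanSpace ℝ (Fin n))}

lemma pd_smooth (hΩ : IsOpen Ω) {g : EuclideanSpace ℝ (Fin n) → ℝ} (hg : ContDiffOn ℝ ∞ g Ω)
    (i : Fin n) : ContDiffOn ℝ ∞ (pd i g) Ω := by
  have := hg.fderiv_of_isOpen (m := ∞) hΩ (by simp)
  exact this.clm_apply contDiffOn_const

lemma sm_diff (hΩ : IsOpen Ω) {g : EuclideanSpace ℝ (Fin n) → ℝ} (hg : ContDiffOn ℝ ∞ g Ω)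
    {x} (hx : x ∈ Ω) : DifferentiableAt ℝ g x :=
  ((hg.contDiffAt (hΩ.mem_nhds hx)).differentiableAt (by simp))

lemma pd_congr (hΩ : IsOpen Ω) {f g : EuclideanSpace ℝ (Fin n) → ℝ} (h : ∀ x ∈ Ω, f x = g x)
    (i : Fin n) : ∀ x ∈ Ω, pd i f x = pd i g x := by
  intro x hx
  have : f =ᶠ[nhds x] g := Filter.eventuallyEq_of_mem (hΩ.mem_nhds hx) h
  rw [pd, pd, this.fderiv_eq]

lemma pd_mul {f g : EuclideanSpace ℝ (Fin n) → ℝ} {x} (hf : DifferentiableAt ℝ f x)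
    (hg : DifferentiableAt ℝ g x) (i : Fin n) :
    pd i (fun y => f y * g y) x = pd i f x * g x + f x * pd i g x := by
  simp only [pd]
  rw [fderiv_fun_mul hf hg]
  simp; ring

lemma pd_add {f g : EuclideanSpace ℝ (Fin n) → ℝ} {x} (hf : DifferentiableAt ℝ f x)
    (hg : DifferentiableAt ℝ g x) (i : Fin n) :
    pd i (fun y => f y + g y) x = pd i f x + pd i g x := by
  simp only [pd]
  rw [fderiv_fun_add hf hg]
  simp

lemma pd_const_mul {g : EuclideanSpace ℝ (Fin n) → ℝ} {x} (c : ℝ)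
    (hg : DifferentiableAt ℝ g x) (i : Fin n) :
    pd i (fun y => c * g y) x = c * pd i g x := by
  simp only [pd]
  rw [fderiv_const_mul hg]
  simp

lemma pd_const (c : ℝ) (i : Fin n) (x) : pd i (fun _ => c) x = 0 := by
  simp [pd]

lemma pd_sum {ι : Type*} (s : Finset ι) {f : ι → EuclideanSpace ℝ (Fin n) → ℝ} {x}
    (hf : ∀ k, DifferentiableAt ℝ (f k) x) (i : Fin n) :
    pd i (fun y => ∑ k ∈ s, f k y) x = ∑ k ∈ s, pd i (f k) x := by
  simp only [pd]
  rw [fderiv_fun_sum (fun k _ => hf k)]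
  simp

lemma pd_pd (hΩ : IsOpen Ω) {g : EuclideanSpace ℝ (Fin n) → ℝ} (hg : ContDiffOn ℝ ∞ g Ω)
    {x} (hx : x ∈ Ω) (i j : Fin n) : pd i (pd j g) x =
      fderiv ℝ (fderiv ℝ g) x (EuclideanSpace.single i 1) (EuclideanSpace.single j 1) := by
  have h1 := hg.fderiv_of_isOpen (m := ∞) hΩ (by simp)
  have h2 : DifferentiableAt ℝ (fderiv ℝ g) x :=
    (h1.contDiffAt (hΩ.mem_nhds hx)).differentiableAt (by simp)
  have : pd j g = fun y => fderiv ℝ g y (EuclideanSpace.single j 1) := rfl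
  rw [pd, this, fderiv_clm_apply h2 (by fun_prop)]
  simp

lemma Hess_apply (hΩ : IsOpen Ω) {g : EuclideanSpace ℝ (Fin n) → ℝ} (hg : ContDiffOn ℝ ∞ g Ω)
    {x} (hx : x ∈ Ω) (i j : Fin n) : Hess n g x i j = pd i (pd j g) x := by
  rw [pd_pd hΩ hg hx]
  simp [Hess, iteratedFDeriv_two_apply]

lemma pd_comm (hΩ : IsOpen Ω) {g : EuclideanSpace ℝ (Fin n) → ℝ} (hg : ContDiffOn ℝ ∞ g Ω)
    (i j : Fin n) : ∀ x ∈ Ω, pd i (pd j g) x = pd j (pd i g) x := by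
  intro x hx
  rw [pd_pd hΩ hg hx, pd_pd hΩ hg hx]
  exact ((hg.contDiffAt (hΩ.mem_nhds hx)).isSymmSndFDerivAt (by simp; exact WithTop.coe_le_coe.2 le_top)) _ _

lemma pdM_mul {A B : EuclideanSpace ℝ (Fin n) → Matrix (Fin n) (Fin n) ℝ} {x}
    (hA : ∀ k l, DifferentiableAt ℝ (fun y => A y k l) x)
    (hB : ∀ k l, DifferentiableAt ℝ (fun y => B y k l) x) (i : Fin n) :
    pdM i (fun y => A y * B y) x = pdM i A x * B x + A x * pdM i B x := by
  ext k l
  simp only [pdM, Matrix.mul_apply, Matrix.of_apply, Matrix.add_apply]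
  rw [pd_sum _ (f := fun m y => A y k m * B y m l) (fun m => (hA k m).mul (hB m l)), ← Finset.sum_add_distrib]
  exact Finset.sum_congr rfl fun m _ => pd_mul (hA k m) (hB m l) i

lemma pd_trace {A : EuclideanSpace ℝ (Fin n) → Matrix (Fin n) (Fin n) ℝ} {x}
    (hA : ∀ k l, DifferentiableAt ℝ (fun y => A y k l) x) (i : Fin n) :
    pd i (fun y => (A y).trace) x = (pdM i A x).trace := by
  simp only [pdM, Matrix.trace, Matrix.diag, Matrix.of_apply]
  rw [pd_sum _ (fun m => hA m m)]

lemma pd_det {A : EuclideanSpace ℝ (Fin n) → Matrix (Fin n) (Fin n) ℝ} {x}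
    (hA : ∀ k l, DifferentiableAt ℝ (fun y => A y k l) x) (i : Fin n) :
    pd i (fun y => (A y).det) x = ((A x).adjugate * pdM i A x).trace := by
  let F : ContinuousMultilinearMap ℝ (fun _ : Fin n => Fin n → ℝ) ℝ :=
    ⟨(Matrix.detRowAlternating (n := Fin n) (R := ℝ)).toMultilinearMap,
      Continuous.matrix_det (A := fun v : Fin n → Fin n → ℝ => (v : Matrix (Fin n) (Fin n) ℝ))
        continuous_id⟩
  have hF : ∀ v : Fin n → Fin n → ℝ, F v = Matrix.det (v : Matrix (Fin n) (Fin n) ℝ) := fun v => rfl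
  let B : EuclideanSpace ℝ (Fin n) → Fin n → Fin n → ℝ := fun y k l => A y k l
  have hB : HasFDerivAt B (ContinuousLinearMap.pi fun k => ContinuousLinearMap.pi fun l =>
      fderiv ℝ (fun y => A y k l) x) x := by
    rw [hasFDerivAt_pi]
    intro k
    rw [hasFDerivAt_pi]
    intro l
    exact (hA k l).hasFDerivAt
  have h1 := (F.hasFDerivAt (B x)).comp x hB
  have h2 : (fun y => (A y).det) = F ∘ B := rfl
  rw [pd, h2, h1.fderiv]
  simp only [ContinuousLinearMap.comp_apply, ContinuousMultilinearMap.linearDeriv_apply, hF]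
  simp only [Matrix.trace, Matrix.diag]
  simp_rw [Matrix.mul_apply]
  rw [Finset.sum_comm]
  refine Finset.sum_congr rfl fun k _ => ?_
  have h3 : ∀ v : Fin n → ℝ, (Function.update (B x) k v : Matrix (Fin n) (Fin n) ℝ)
    = (A x).updateRow k v := fun v => rfl
  rw [h3, ← Matrix.cramer_transpose_apply, Matrix.cramer_eq_adjugate_mulVec, ← Matrix.adjugate_transpose]
  simp only [Matrix.mulVec, dotProduct, Matrix.transpose_apply]
  rfl

lemma det_smooth {A : EuclideanSpace ℝ (Fin n) → Matrix (Fin n) (Fin n) ℝ}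
    (hA : ∀ k l, ContDiffOn ℝ ∞ (fun y => A y k l) Ω) :
    ContDiffOn ℝ ∞ (fun y => (A y).det) Ω := by
  simp only [Matrix.det_apply]
  refine ContDiffOn.sum fun σ _ => ?_
  exact (contDiffOn_prod fun k _ => hA _ _).const_smul _

lemma inv_smooth {A : EuclideanSpace ℝ (Fin n) → Matrix (Fin n) (Fin n) ℝ}
    (hA : ∀ k l, ContDiffOn ℝ ∞ (fun y => A y k l) Ω) (hd : ∀ x ∈ Ω, (A x).det ≠ 0) (k l : Fin n) :
    ContDiffOn ℝ ∞ (fun y => (A y)⁻¹ k l) Ω := by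
  have h1 : ContDiffOn ℝ ∞ (fun y => (A y).adjugate k l) Ω := by
    simp only [Matrix.adjugate_apply]
    refine det_smooth (A := fun y => (A y).updateRow l (Pi.single k 1)) fun p q => ?_
    by_cases h : p = l
    · subst h
      simp only [Matrix.updateRow_self]
      exact contDiffOn_const
    · simp only [Matrix.updateRow_ne h]
      exact hA p q
  simp only [Matrix.inv_def, Matrix.smul_apply, Ring.inverse_eq_inv', smul_eq_mul]
  exact ((det_smooth hA).inv hd).mul h1

lemma pdM_inv (hΩ : IsOpen Ω) {A : EuclideanSpace ℝ (Fin n) → Matrix (Fin n) (Fin n) ℝ}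
    (hA : ∀ k l, ContDiffOn ℝ ∞ (fun y => A y k l) Ω) (hd : ∀ x ∈ Ω, (A x).det ≠ 0) (i : Fin n)
    {x} (hx : x ∈ Ω) :
    pdM i (fun y => (A y)⁻¹) x = - ((A x)⁻¹ * pdM i A x * (A x)⁻¹) := by
  have h1 := pdM_mul (x := x) (fun k l => sm_diff hΩ (inv_smooth hA hd k l) hx)
    (fun k l => sm_diff hΩ (hA k l) hx) i
  have h2 : pdM i (fun y => (A y)⁻¹ * A y) x = 0 := by
    ext k l
    simp only [pdM, Matrix.of_apply]
    rw [pd_congr hΩ (g := fun _ => (1 : Matrix (Fin n) (Fin n) ℝ) k l) _ i x hx, pd_const]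
    · rfl
    · intro y hy
      rw [Matrix.nonsing_inv_mul _ (isUnit_iff_ne_zero.2 (hd y hy))]
  rw [h2] at h1
  have h3 : A x * (A x)⁻¹ = 1 := Matrix.mul_nonsing_inv _ (isUnit_iff_ne_zero.2 (hd x hx))
  have h4 : pdM i (fun y => (A y)⁻¹) x * A x = - ((A x)⁻¹ * pdM i A x) :=
    eq_neg_of_add_eq_zero_left h1.symm
  calc _ = pdM i (fun y => (A y)⁻¹) x * A x * (A x)⁻¹ := by rw [Matrix.mul_assoc, h3, Matrix.mul_one]
    _ = _ := by rw [h4, Matrix.neg_mul]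

/-- `t_i = tr(A⁻¹ ∂_i A)`. -/
lemma pd_det' (hΩ : IsOpen Ω) {A : EuclideanSpace ℝ (Fin n) → Matrix (Fin n) (Fin n) ℝ}
    (hA : ∀ k l, ContDiffOn ℝ ∞ (fun y => A y k l) Ω) (hd : ∀ x ∈ Ω, (A x).det ≠ 0) (i : Fin n) :
    ∀ x ∈ Ω, pd i (fun y => (A y).det) x = (A x).det * ((A x)⁻¹ * pdM i A x).trace := by
  intro x hx
  rw [pd_det (fun k l => sm_diff hΩ (hA k l) hx), Matrix.inv_def, Matrix.smul_mul,
    Matrix.trace_smul, Ring.inverse_eq_inv', smul_eq_mul, mul_inv_cancel_left₀ (hd x hx)]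

lemma t_smooth (hΩ : IsOpen Ω) {A : EuclideanSpace ℝ (Fin n) → Matrix (Fin n) (Fin n) ℝ}
    (hA : ∀ k l, ContDiffOn ℝ ∞ (fun y => A y k l) Ω) (hd : ∀ x ∈ Ω, (A x).det ≠ 0) (i : Fin n) :
    ContDiffOn ℝ ∞ (fun y => ((A y)⁻¹ * pdM i A y).trace) Ω := by
  simp only [Matrix.trace, Matrix.diag, Matrix.mul_apply]
  exact ContDiffOn.sum fun k _ => ContDiffOn.sum fun l _ =>
    (inv_smooth hA hd k l).mul (pd_smooth hΩ (hA l k) i)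

lemma pd_t (hΩ : IsOpen Ω) {A : EuclideanSpace ℝ (Fin n) → Matrix (Fin n) (Fin n) ℝ}
    (hA : ∀ k l, ContDiffOn ℝ ∞ (fun y => A y k l) Ω) (hd : ∀ x ∈ Ω, (A x).det ≠ 0) (i j : Fin n) :
    ∀ x ∈ Ω, pd i (fun y => ((A y)⁻¹ * pdM j A y).trace) x =
      ((A x)⁻¹ * pdM i (pdM j A) x).trace
        - ((A x)⁻¹ * pdM i A x * ((A x)⁻¹ * pdM j A x)).trace := by
  intro x hx
  have e1 : ∀ k l, DifferentiableAt ℝ (fun y => (A y)⁻¹ k l) x :=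
    fun k l => sm_diff hΩ (inv_smooth hA hd k l) hx
  have e2 : ∀ k l, DifferentiableAt ℝ (fun y => pdM j A y k l) x :=
    fun k l => sm_diff hΩ (pd_smooth hΩ (hA k l) j) hx
  rw [pd_trace, pdM_mul e1 e2, pdM_inv hΩ hA hd i hx]
  · rw [Matrix.trace_add, Matrix.neg_mul, Matrix.trace_neg, ← Matrix.mul_assoc]
    ring
  · intro k l
    simp only [Matrix.mul_apply]
    exact DifferentiableAt.fun_sum fun m _ => (e1 k m).mul (e2 m l)

open scoped MatrixOrder in
lemma trace_sq_le {W B : Matrix (Fin n) (Fin n) ℝ} (hW : W.PosSemidef) (hB : B.transpose = B) :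
    (W * B).trace ^ 2 ≤ n * (W * B * (W * B)).trace := by
  obtain ⟨S, rfl⟩ : ∃ S : Matrix (Fin n) (Fin n) ℝ, W = S.transpose * S := by
    obtain ⟨S, hS⟩ := CStarAlgebra.nonneg_iff_eq_star_mul_self.1 hW.nonneg
    exact ⟨S, by rw [hS, Matrix.star_eq_conjTranspose, Matrix.conjTranspose_eq_transpose_of_trivial]⟩
  set C := S * B * S.transpose with hC
  have hCs : C.transpose = C := by
    simp [hC, Matrix.transpose_mul, hB, Matrix.mul_assoc]
  have h1 : (S.transpose * S * B).trace = C.trace := by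
    rw [Matrix.mul_assoc, Matrix.trace_mul_comm]
  have h2 : (S.transpose * S * B * (S.transpose * S * B)).trace = (C * C).trace := by
    have : S.transpose * S * B * (S.transpose * S * B)
      = S.transpose * (S * B * S.transpose * S * B) := by simp only [Matrix.mul_assoc]
    rw [this, Matrix.trace_mul_comm]
    simp only [hC, Matrix.mul_assoc]
  rw [h1, h2]
  have h3 : C.trace ^ 2 ≤ n * ∑ i, C i i ^ 2 := by
    have := sq_sum_le_card_mul_sum_sq (s := Finset.univ) (f := fun i => C i i)
    simpa [Matrix.trace] using this
  refine h3.trans (mul_le_mul_of_nonneg_left ?_ (by positivity))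
  simp only [Matrix.trace, Matrix.diag, Matrix.mul_apply]
  refine Finset.sum_le_sum fun i _ => ?_
  have : ∀ j, C i j * C j i = C i j ^ 2 := by
    intro j
    have : C j i = C i j := by conv_lhs => rw [← hCs, Matrix.transpose_apply]
    rw [this, sq]
  simp only [this]
  exact Finset.single_le_sum (f := fun j => C i j ^ 2) (fun j _ => sq_nonneg _) (Finset.mem_univ i)

end

/-- The key computation in Proposition 5.5: if `h` is a smooth convex function with positive
definite Hessian satisfying `Δh + b·det(D²h) = 1` on an open set `Ω`, then
`f = det(D²h)^{1/n}` is a supersolution of the linearized equation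
`L g = Δg + b·det(D²h)·tr((D²h)⁻¹ D²g)`, i.e. `L f ≤ 0` on `Ω`. -/
theorem statement15 (n : ℕ) (b : ℝ) (hb : 0 ≤ b)
    (Ω : Set (EuclideanSpace ℝ (Fin n))) (hΩ : IsOpen Ω)
    (h : EuclideanSpace ℝ (Fin n) → ℝ)
    (hsmooth : ContDiffOn ℝ (⊤ : ℕ∞) h Ω)
    (hpos : ∀ x ∈ Ω, (Hess n h x).PosDef)
    (heq : ∀ x ∈ Ω, (Hess n h x).trace + b * (Hess n h x).det = 1) :
    ∀ x ∈ Ω,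
      (Hess n (fun y => (Hess n h y).det ^ (1 / (n : ℝ))) x).trace +
        b * (Hess n h x).det *
          ((Hess n h x)⁻¹ * Hess n (fun y => (Hess n h y).det ^ (1 / (n : ℝ))) x).trace ≤ 0 := by
  intro x hx
  rcases Nat.eq_zero_or_pos n with rfl | hn
  · simp [Matrix.trace]
  have hn' : (1 : ℝ) ≤ n := by exact_mod_cast hn
  set A := Hess n h with hAdef
  have hApd : ∀ k l, ∀ y ∈ Ω, A y k l = pd k (pd l h) y := fun k l y hy =>
    Hess_apply hΩ hsmooth hy k l
  have hA : ∀ k l, ContDiffOn ℝ ∞ (fun y => A y k l) Ω := fun k l =>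
    (pd_smooth hΩ (pd_smooth hΩ hsmooth l) k).congr (hApd k l)
  have hdp : ∀ y ∈ Ω, 0 < (A y).det := fun y hy => (hpos y hy).det_pos
  have hd : ∀ y ∈ Ω, (A y).det ≠ 0 := fun y hy => (hdp y hy).ne'
  have hDs := det_smooth hA
  have hfs : ContDiffOn ℝ ∞ (fun y => (A y).det ^ (1 / (n : ℝ))) Ω := hDs.rpow_const_of_ne hd
  -- abbreviations
  set W := (A x)⁻¹ with hW
  set D := (A x).det with hD
  set φ := (A x).det ^ (1 / (n : ℝ)) with hφ
  set t : Fin n → ℝ := fun i => (W * pdM i A x).trace with ht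
  set Q : Fin n → Fin n → ℝ := fun i j => (W * pdM i A x * (W * pdM j A x)).trace with hQ
  set S : Fin n → Fin n → ℝ := fun i j => (W * pdM i (pdM j A) x).trace with hS
  have hD0 : 0 < D := hdp x hx
  have hφ0 : 0 < φ := Real.rpow_pos_of_pos hD0 _
  -- second derivatives of the determinant
  have hDD : ∀ i j, pd i (pd j (fun y => (A y).det)) x = D * (t i * t j + S i j - Q i j) := by
    intro i j
    rw [pd_congr hΩ (pd_det' hΩ hA hd j) i x hx,
      pd_mul (sm_diff hΩ hDs hx) (sm_diff hΩ (t_smooth hΩ hA hd j) hx),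
      pd_det' hΩ hA hd i x hx, pd_t hΩ hA hd i j x hx]
    simp only [ht, hS, hQ]
    ring
  -- first derivative of f
  have hf1 : ∀ j, ∀ y ∈ Ω, pd j (fun y => (A y).det ^ (1 / (n : ℝ))) y =
      (1 / (n : ℝ)) * ((A y).det ^ (1 / (n : ℝ)) * ((A y)⁻¹ * pdM j A y).trace) := by
    intro j y hy
    have := (sm_diff hΩ hDs hy).hasFDerivAt.rpow_const (p := 1 / (n : ℝ)) (Or.inl (hd y hy))
    have h2 := pd_det' hΩ hA hd j y hy
    simp only [pd] at h2 ⊢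
    rw [this.fderiv]
    simp only [smul_apply, smul_eq_mul]
    rw [h2, Real.rpow_sub_one (hd y hy)]
    field_simp [hd y hy]
  have hff : ∀ i j, Hess n (fun y => (A y).det ^ (1 / (n : ℝ))) x i j =
      φ / n * (t i * t j / n + S i j - Q i j) := by
    intro i j
    have e1 := sm_diff hΩ hfs hx
    have e2 := sm_diff hΩ (t_smooth hΩ hA hd j) hx
    rw [Hess_apply hΩ hfs hx, pd_congr hΩ (hf1 j) i x hx, pd_const_mul _ (e1.fun_mul e2),
      pd_mul e1 e2, hf1 i x hx, pd_t hΩ hA hd i j x hx]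
    simp only [ht, hS, hQ]
    ring
  -- symmetry of fourth derivatives
  have hsym : ∀ i j k l, pd i (pd j (fun y => A y k l)) x = pd k (pd l (fun y => A y i j)) x := by
    have key : ∀ i j k l, pd i (pd j (fun y => A y k l)) x = pd i (pd j (pd k (pd l h))) x :=
      fun i j k l => pd_congr hΩ (pd_congr hΩ (hApd k l) j) i x hx
    intro i j k l
    have sl := pd_smooth hΩ hsmooth l
    have sj := pd_smooth hΩ hsmooth j
    rw [key, key]
    rw [pd_congr hΩ (pd_comm hΩ sl j k) i x hx, pd_comm hΩ (pd_smooth hΩ sl j) i k x hx,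
      pd_congr hΩ (pd_congr hΩ (pd_comm hΩ hsmooth j l) i) k x hx,
      pd_congr hΩ (pd_comm hΩ sj i l) k x hx]
  have hAsym : ∀ y ∈ Ω, ∀ k l, A y k l = A y l k := by
    intro y hy k l
    rw [hApd k l y hy, hApd l k y hy, pd_comm hΩ hsmooth k l y hy]
  have hWpd : W.PosDef := (hpos x hx).inv
  have hWsym : ∀ k l, W k l = W l k := by
    intro k l
    have := hWpd.isHermitian.apply k l
    simpa using this.symm
  -- differentiate the equation twice
  have heq2 : ∀ k l, (∑ i, pd k (pd l (fun y => A y i i)) x)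
      + b * (D * (t k * t l + S k l - Q k l)) = 0 := by
    intro k l
    rw [← hDD]
    have e : ∀ y ∈ Ω, (∑ i, A y i i) + b * (A y).det = 1 := heq
    have e1 : ∀ y ∈ Ω, (∑ i, pd l (fun y => A y i i) y) + b * pd l (fun y => (A y).det) y = 0 := by
      intro y hy
      have := pd_congr hΩ e l y hy
      rw [pd_const, pd_add, pd_sum, pd_const_mul] at this
      · exact this
      · exact sm_diff hΩ hDs hy
      · exact fun i => sm_diff hΩ (hA i i) hy
      · exact DifferentiableAt.fun_sum fun i _ => sm_diff hΩ (hA i i) hy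
      · exact (sm_diff hΩ hDs hy).const_mul b
    have := pd_congr hΩ e1 k x hx
    have d1 := fun i => sm_diff hΩ (pd_smooth hΩ (hA i i) l) hx
    have d2 := sm_diff hΩ (pd_smooth hΩ hDs l) hx
    rw [pd_const, pd_add, pd_sum, pd_const_mul] at this
    · exact this
    · exact d2
    · exact d1
    · exact DifferentiableAt.fun_sum fun i _ => d1 i
    · exact d2.const_mul b
  have hSi : ∀ i, S i i = ∑ k, ∑ l, W k l * pd k (pd l (fun y => A y i i)) x := by
    intro i
    simp only [hS, Matrix.trace, Matrix.diag, Matrix.mul_apply]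
    refine Finset.sum_congr rfl fun k _ => Finset.sum_congr rfl fun l _ => ?_
    rw [← hsym i i k l]
    congr 1
    have : ∀ y ∈ Ω, A y l k = A y k l := fun y hy => hAsym y hy l k
    exact pd_congr hΩ (pd_congr hΩ this i) i x hx
  have hsum : (∑ i, S i i) + b * D * ∑ k, ∑ l, W k l * (t k * t l + S k l - Q k l) = 0 := by
    have e : (∑ k, ∑ l, W k l * ((∑ i, pd k (pd l (fun y => A y i i)) x)
      + b * (D * (t k * t l + S k l - Q k l)))) = 0 := by simp [heq2]
    rw [← e]
    simp only [hSi, mul_add, Finset.sum_add_distrib]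
    congr 1
    · rw [Finset.sum_comm]
      refine Finset.sum_congr rfl fun k _ => ?_
      rw [Finset.sum_comm]
      simp [Finset.mul_sum]
    · simp only [Finset.mul_sum]
      refine Finset.sum_congr rfl fun k _ => Finset.sum_congr rfl fun l _ => by ring
  have hQt : ∀ i, t i ^ 2 / n ≤ Q i i := by
    intro i
    have := trace_sq_le (n := n) (B := pdM i A x) hWpd.posSemidef (by
      ext k l
      simp only [pdM, Matrix.transpose_apply, Matrix.of_apply]
      exact pd_congr hΩ (fun y hy => hAsym y hy l k) i x hx)
    rw [div_le_iff₀ (by linarith), mul_comm]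
    exact this
  have hWt : 0 ≤ ∑ k, ∑ l, W k l * (t k * t l) := by
    have := hWpd.posSemidef.dotProduct_mulVec_nonneg t
    simp only [dotProduct, Matrix.mulVec, Finset.mul_sum, star_trivial] at this
    refine this.trans_eq ?_
    refine Finset.sum_congr rfl fun k _ => Finset.sum_congr rfl fun l _ => by ring
  have hgoal : (Hess n (fun y => (A y).det ^ (1 / (n : ℝ))) x).trace +
      b * D * (W * Hess n (fun y => (A y).det ^ (1 / (n : ℝ))) x).trace =
      φ / n * ((∑ i, (t i ^ 2 / n - Q i i))
        - b * D * (1 - 1 / n) * ∑ k, ∑ l, W k l * (t k * t l)) := by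
    have e1 : (Hess n (fun y => (A y).det ^ (1 / (n : ℝ))) x).trace =
        φ / n * ((∑ i, (t i ^ 2 / n - Q i i)) + ∑ i, S i i) := by
      simp only [Matrix.trace, Matrix.diag, hff]
      rw [← Finset.sum_add_distrib, Finset.mul_sum]
      exact Finset.sum_congr rfl fun i _ => by ring
    have e2 : (W * Hess n (fun y => (A y).det ^ (1 / (n : ℝ))) x).trace =
        φ / n * ((∑ k, ∑ l, W k l * (t k * t l + S k l - Q k l))
          - (1 - 1 / n) * ∑ k, ∑ l, W k l * (t k * t l)) := by
      simp only [Matrix.trace, Matrix.diag, Matrix.mul_apply, hff]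
      rw [Finset.sum_comm]
      simp only [Finset.mul_sum, ← Finset.sum_sub_distrib]
      refine Finset.sum_congr rfl fun k _ => Finset.sum_congr rfl fun l _ => ?_
      rw [hWsym l k]
      ring
    rw [e1, e2]
    linear_combination (φ / n) * hsum
  rw [hgoal]
  refine mul_nonpos_of_nonneg_of_nonpos (by positivity) ?_
  have g1 : ∑ i, (t i ^ 2 / n - Q i i) ≤ 0 :=
    Finset.sum_nonpos fun i _ => sub_nonpos.2 (hQt i)
  have g2 : (0 : ℝ) ≤ 1 - 1 / n := by
    rw [sub_nonneg, div_le_one (by linarith)]; exact hn'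
  have g3 : 0 ≤ b * D * (1 - 1 / n) * ∑ k, ∑ l, W k l * (t k * t l) :=
    mul_nonneg (mul_nonneg (mul_nonneg hb hD0.le) g2) hWt
  linarith
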